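/- arXiv:0803.2034 — 3 statements merged into one kernel-verified Lean document; each statement's English description precedes it below -/
import Mathlib

section
/- For all natural numbers N and n, the cardinality Nat.card of the set of tuples t : Fin (2*n) → (Fin N → ℤ) such that for every i there exists j : Fin N with t i = Pi.single j 1 or t i = -(Pi.single j 1), and ∑ i, t i = 0, equals the sum, over all functions m : Fin N → ℕ with ∑ j, m j = n (for instance m ranging over Fintype.piFinset (fun _ => Finset.range (n+1)) filtered by ∑ j, m j = n), of the multinomial coefficient Nat.multinomial Finset.univ (Sum.elim m m), i.e. of (2n)! / ∏ j, ((m j)! * (m j)!). -/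
open Finset in
/-- The multinomial coefficient counts the words of a given length in which every letter `a`
occurs a prescribed number `c a` of times. -/
theorem card_filter_card_fiber_eq_multinomial {α : Type*} [Fintype α] [DecidableEq α] {k : ℕ}
    (c : α → ℕ) (hc : ∑ a, c a = k) :
    #{f : Fin k → α | ∀ a, #{i | f i = a} = c a} = Nat.multinomial univ c := by
  set d : α →₀ ℕ := Finsupp.equivFunOnFinite.symm c with hd
  have hcoeff := MvPolynomial.coeff_sum_X_pow_of_fintype (R := ℕ) d k
  have hsum : (d.sum fun _ m => m) = k := by
    rw [Finsupp.sum_fintype _ _ fun _ => rfl]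
    exact hc
  have hword (f : Fin k → α) : (∏ i, MvPolynomial.X (f i) : MvPolynomial α ℕ) =
      MvPolynomial.monomial (∑ i, Finsupp.single (f i) 1) 1 := by
    rw [MvPolynomial.monomial_sum_one]
    rfl
  have hcount (f : Fin k → α) :
      ∑ i, Finsupp.single (f i) 1 = d ↔ ∀ a, #{i | f i = a} = c a := by
    rw [Finsupp.ext_iff]
    simp [hd, Finsupp.finsetSum_apply, Finsupp.single_apply]
  rw [if_pos hsum, Finset.sum_pow', MvPolynomial.coeff_sum] at hcoeff
  simp only [hword, MvPolynomial.coeff_monomial, hcount, Fintype.piFinset_univ, sum_boole,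
    Nat.cast_id] at hcoeff
  rw [hcoeff, ← Finsupp.multinomial_of_support_subset (subset_univ _)]
  rfl

/-- The signed standard basis vectors of `ℤ^ι`. -/
def signedBasis {ι : Type*} [DecidableEq ι] : ι ⊕ ι → ι → ℤ :=
  Sum.elim (fun j => Pi.single j 1) (fun j => -Pi.single j 1)

theorem signedBasis_injective {ι : Type*} [DecidableEq ι] :
    Function.Injective (signedBasis (ι := ι)) := by
  rintro (a | a) (b | b) h <;> replace h := congrFun h a <;>
    simp only [signedBasis, Sum.elim_inl, Sum.elim_inr, Pi.neg_apply, Pi.single_apply] at h <;>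
    grind

theorem mem_range_signedBasis {ι : Type*} [DecidableEq ι] {v : ι → ℤ} :
    v ∈ Set.range signedBasis ↔ ∃ j, v = Pi.single j 1 ∨ v = -Pi.single j 1 := by
  simp [signedBasis, exists_or, eq_comm]

open Finset in
theorem sum_signedBasis_eq_zero_iff {ι κ : Type*} [DecidableEq ι] [Fintype κ]
    (f : κ → ι ⊕ ι) :
    ∑ i, signedBasis (f i) = 0 ↔ ∀ j, #{i | f i = .inl j} = #{i | f i = .inr j} := by
  have hterm (x : ι ⊕ ι) (j : ι) : signedBasis x j =
      (if x = .inl j then 1 else 0) - (if x = .inr j then 1 else 0) := by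
    rcases x with a | a <;> simp [signedBasis, Pi.single_apply, eq_comm]
  simp [funext_iff, Finset.sum_apply, hterm, sub_eq_zero]

/-- A tuple of signed standard basis vectors is the same as a word in their indices. -/
noncomputable def signedBasisTupleEquiv (ι κ : Type*) [DecidableEq ι] [Fintype κ] :
    {f : κ → ι ⊕ ι // ∑ i, signedBasis (f i) = 0} ≃
      {t : κ → ι → ℤ //
        (∀ i, ∃ j, t i = Pi.single j 1 ∨ t i = -(Pi.single j 1)) ∧ ∑ i, t i = 0} :=
  Equiv.ofBijective
    (fun f => ⟨fun i => signedBasis (f.1 i), fun i => mem_range_signedBasis.1 ⟨_, rfl⟩, f.2⟩) <| by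
    constructor
    · intro f g h
      exact Subtype.ext <| funext fun i =>
        signedBasis_injective (congrFun (congrArg Subtype.val h) i)
    · rintro ⟨t, ht, hsum⟩
      choose f hf using fun i => mem_range_signedBasis.2 (ht i)
      obtain rfl : (fun i => signedBasis (f i)) = t := funext hf
      exact ⟨⟨f, hsum⟩, rfl⟩

theorem card_balanced_tuples_eq_sum_multinomial (N n : ℕ) :
    Nat.card {t : Fin (2 * n) → (Fin N → ℤ) //
        (∀ i, ∃ j : Fin N, t i = Pi.single j 1 ∨ t i = -(Pi.single j 1)) ∧
        ∑ i, t i = 0} =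
      ∑ m ∈ (Fintype.piFinset fun _ : Fin N => Finset.range (n + 1)).filter
          (fun m => ∑ j, m j = n),
        Nat.multinomial Finset.univ (Sum.elim m m : Fin N ⊕ Fin N → ℕ) := by
  rw [← Nat.card_congr (signedBasisTupleEquiv (Fin N) (Fin (2 * n))), Nat.card_eq_fintype_card,
    Fintype.card_subtype,
    Finset.card_eq_sum_card_fiberwise
      (f := fun (f : Fin (2 * n) → Fin N ⊕ Fin N) j => Finset.card {i | f i = .inl j})]
  · refine Finset.sum_congr rfl fun m hm => ?_
    rw [← card_filter_card_fiber_eq_multinomial (k := 2 * n) (Sum.elim m m)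
      (by simp [(Finset.mem_filter.1 hm).2, two_mul]), Finset.filter_filter]
    congr 1
    ext f
    simp only [Finset.mem_filter_univ, sum_signedBasis_eq_zero_iff, Sum.forall, Sum.elim_inl,
      Sum.elim_inr]
    constructor
    · rintro ⟨hbal, rfl⟩
      exact ⟨fun _ => rfl, fun j => (hbal j).symm⟩
    · rintro ⟨hinl, hinr⟩
      exact ⟨fun j => (hinl j).trans (hinr j).symm, funext hinl⟩
  · intro f hf
    have hbal := (sum_signedBasis_eq_zero_iff f).1 (Finset.mem_filter.1 hf).2
    have htotal : ∑ x, Finset.card {i | f i = x} = 2 * n := by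
      simpa using (Finset.card_eq_sum_card_fiberwise (f := f) (s := Finset.univ)
        (t := Finset.univ) (by simp)).symm
    rw [Fintype.sum_sum_type, ← Finset.sum_congr rfl fun j _ => hbal j] at htotal
    have hn : ∑ j, Finset.card {i | f i = .inl j} = n := by omega
    simp only [Finset.coe_filter, Set.mem_ofPred_eq, Fintype.mem_piFinset, Finset.mem_range]
    exact ⟨fun j => Nat.lt_succ_of_le <|
      (Finset.single_le_sum (f := fun j => Finset.card {i | f i = .inl j})
        (fun _ _ => Nat.zero_le _) (Finset.mem_univ j)).trans_eq hn, hn⟩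
end

section
/- Let V and W be quivers and let φ : V ⥤q W be a prefunctor such that the object map φ.obj is injective and for all a b : V the arrow map φ.map : (a ⟶ b) → (φ.obj a ⟶ φ.obj b) is injective. Then the induced functor CategoryTheory.Groupoid.Free.freeGroupoidFunctor φ : FreeGroupoid V ⥤ FreeGroupoid W between free groupoids is faithful. -/
open CategoryTheory

universe u v u' v'

/-- An induction principle for the morphisms of a free groupoid. -/
theorem Quiver.FreeGroupoid.hom_induction {V : Type u} [Quiver.{v} V]
    {P : ∀ {X Y : Quiver.FreeGroupoid V}, (X ⟶ Y) → Prop}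
    (id : ∀ X : Quiver.FreeGroupoid V, P (𝟙 X))
    (of : ∀ {a b : V} (e : a ⟶ b), P ((Quiver.FreeGroupoid.of V).map e))
    (comp : ∀ {X Y Z : Quiver.FreeGroupoid V} (f : X ⟶ Y) (g : Y ⟶ Z), P f → P g → P (f ≫ g))
    (inv : ∀ {X Y : Quiver.FreeGroupoid V} (f : X ⟶ Y), P f → P (Groupoid.inv f))
    {X Y : Quiver.FreeGroupoid V} (f : X ⟶ Y) : P f := by
  obtain ⟨x⟩ := X
  obtain ⟨y⟩ := Y
  obtain ⟨p, rfl⟩ := Quot.exists_rep f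
  change Quiver.Path (V := Quiver.Symmetrify V) x y at p
  induction p with
  | nil => exact id _
  | cons p e ih =>
    refine comp (Quot.mk _ p) (Quot.mk _ (Quiver.Hom.toPath (V := Quiver.Symmetrify V) e)) ih ?_
    rcases e with e | e
    · exact of e
    · exact inv _ (of e)

namespace CategoryTheory.Groupoid

variable {C : Type u} [Groupoid.{v} C]

open Classical in
/-- Right multiplication by `f : a ⟶ b` on arrows out of `x` with target `a`; right multiplication
by its inverse on the remaining arrows with target `b`; the identity elsewhere. -/
noncomputable def mulRightExtend (x : C) {a b : C} (f : a ⟶ b) (t : Σ y, x ⟶ y) : Σ y, x ⟶ y :=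
  if h : t.1 = a then ⟨b, t.2 ≫ eqToHom h ≫ f⟩
  else if h : t.1 = b then ⟨a, t.2 ≫ eqToHom h ≫ Groupoid.inv f⟩
  else t

theorem mulRightExtend_mk (x : C) {a b : C} (f : a ⟶ b) (g : x ⟶ a) :
    mulRightExtend x f ⟨a, g⟩ = ⟨b, g ≫ f⟩ := by
  simp [mulRightExtend]

theorem mulRightExtend_inv_mulRightExtend (x : C) {a b : C} (f : a ⟶ b) (t : Σ y, x ⟶ y) :
    mulRightExtend x (Groupoid.inv f) (mulRightExtend x f t) = t := by
  obtain ⟨y, g⟩ := t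
  by_cases ha : y = a
  · subst ha
    simp [mulRightExtend_mk]
  · by_cases hb : y = b
    · subst hb
      have h : mulRightExtend x f ⟨y, g⟩ = ⟨a, g ≫ Groupoid.inv f⟩ := by
        simp [mulRightExtend, ha]
      rw [h]
      simp [mulRightExtend, Ne.symm ha]
    · simp [mulRightExtend, ha, hb]

/-- The permutation of the arrows out of `x` given by `mulRightExtend`. -/
noncomputable def mulRightPerm (x : C) {a b : C} (f : a ⟶ b) : Equiv.Perm (Σ y, x ⟶ y) where
  toFun := mulRightExtend x f
  invFun := mulRightExtend x (Groupoid.inv f)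
  left_inv := mulRightExtend_inv_mulRightExtend x f
  right_inv t := by
    simpa using mulRightExtend_inv_mulRightExtend x (Groupoid.inv f) t

end CategoryTheory.Groupoid

open CategoryTheory.Groupoid

/-- A functor to permutations that agrees with `mulRightPerm` on generators acts on arrows out of
`x` by composition. -/
theorem Quiver.FreeGroupoid.map_apply_mk {V : Type u} [Quiver.{v} V] (x : Quiver.FreeGroupoid V)
    (Φ : Quiver.FreeGroupoid V ⥤ SingleObj (Equiv.Perm (Σ y, x ⟶ y)))
    (hΦ : ∀ {a b : V} (e : a ⟶ b), Φ.map ((Quiver.FreeGroupoid.of V).map e) =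
      mulRightPerm x ((Quiver.FreeGroupoid.of V).map e))
    {y z : Quiver.FreeGroupoid V} (p : y ⟶ z) (g : x ⟶ y) :
    DFunLike.coe (F := Equiv.Perm (Σ y, x ⟶ y)) (Φ.map p) ⟨y, g⟩ = ⟨z, g ≫ p⟩ := by
  induction p using Quiver.FreeGroupoid.hom_induction with
  | id X =>
    rw [Φ.map_id, Category.comp_id]
    rfl
  | of e =>
    rw [hΦ]
    exact mulRightExtend_mk x _ g
  | comp p q hp hq =>
    rw [Φ.map_comp, ← Category.assoc, ← hq, ← hp]
    rfl
  | inv p hp =>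
    have h := hp (g ≫ Groupoid.inv p)
    rw [Category.assoc, Groupoid.inv_comp, Category.comp_id] at h
    rw [Groupoid.inv_eq_inv, Functor.map_inv, ← Groupoid.inv_eq_inv, ← Groupoid.inv_eq_inv]
    exact (Equiv.symm_apply_eq (Φ.map p : Equiv.Perm (Σ y, x ⟶ y))).2 h.symm

theorem Prefunctor.total_injective {V : Type u} [Quiver.{v} V] {W : Type u'} [Quiver.{v'} W]
    (φ : V ⥤q W) (hobj : Function.Injective φ.obj)
    (hmap : ∀ a b : V, Function.Injective (φ.map : (a ⟶ b) → (φ.obj a ⟶ φ.obj b))) :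
    Function.Injective fun e : Quiver.Total V =>
      (⟨φ.obj e.left, φ.obj e.right, φ.map e.hom⟩ : Quiver.Total W) := by
  rintro ⟨a, b, e⟩ ⟨a', b', e'⟩ h
  simp only [Quiver.Total.mk.injEq] at h
  obtain ⟨ha, hb, he⟩ := h
  obtain rfl := hobj ha
  obtain rfl := hobj hb
  rw [hmap _ _ (eq_of_heq he)]

theorem freeGroupoidFunctor_faithful_of_injective
    {V : Type u} [Quiver.{v} V] {W : Type u'} [Quiver.{v'} W]
    (φ : V ⥤q W) (hobj : Function.Injective φ.obj)
    (hmap : ∀ a b : V, Function.Injective (φ.map : (a ⟶ b) → (φ.obj a ⟶ φ.obj b))) :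
    (Quiver.freeGroupoidFunctor φ).Faithful := by
  refine ⟨fun {x y} p q hpq => ?_⟩
  let σ : Quiver.Total V → Equiv.Perm (Σ y, x ⟶ y) :=
    fun e => mulRightPerm x ((Quiver.FreeGroupoid.of V).map e.hom)
  let G : W ⥤q SingleObj (Equiv.Perm (Σ y, x ⟶ y)) :=
    { obj := fun _ => SingleObj.star _
      map := fun {a b} e => Function.extend
        (fun e : Quiver.Total V => (⟨φ.obj e.left, φ.obj e.right, φ.map e.hom⟩ : Quiver.Total W))
        σ (fun _ => 1) ⟨a, b, e⟩ }
  let Φ := Quiver.freeGroupoidFunctor φ ⋙ Quiver.FreeGroupoid.lift G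
  have hΦ : ∀ {a b : V} (e : a ⟶ b), Φ.map ((Quiver.FreeGroupoid.of V).map e) =
      mulRightPerm x ((Quiver.FreeGroupoid.of V).map e) := by
    intro a b e
    have h : Φ.map ((Quiver.FreeGroupoid.of V).map e) = G.map (φ.map e) := by
      simp [Φ, Quiver.freeGroupoidFunctor, Quiver.FreeGroupoid.lift, Quiver.FreeGroupoid.of]
      rfl
    rw [h]
    exact (φ.total_injective hobj hmap).extend_apply σ (fun _ => 1) ⟨a, b, e⟩
  have h : Φ.map p = Φ.map q := congrArg (Quiver.FreeGroupoid.lift G).map hpq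
  have hp := Quiver.FreeGroupoid.map_apply_mk x Φ hΦ p (𝟙 x)
  have hq := Quiver.FreeGroupoid.map_apply_mk x Φ hΦ q (𝟙 x)
  rw [h, hq] at hp
  simpa using hp.symm
end

section
/- Let N be a natural number and let V be a quiver having a unique vertex v (an instance Unique V) such that the type of loops (v ⟶ v) is equivalent to Fin N. Then the vertex group of the free groupoid of V at the object corresponding to v — the type of endomorphisms of that object in CategoryTheory.FreeGroupoid V, with the group structure a groupoid induces on each endomorphism type — is isomorphic as a group to the free group FreeGroup (Fin N): Nonempty of a MulEquiv between them. -/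
open CategoryTheory

universe u v

namespace Quiver.FreeGroupoid

variable (V : Type u) [Quiver.{v} V] [Unique V]

/-- The homomorphism from the free group on the loops at the unique vertex of `V` to the vertex
group of the free groupoid, sending each loop to its class. -/
def ofFreeGroup :
    FreeGroup ((default : V) ⟶ default) →* ((of V).obj default ⟶ (of V).obj default) :=
  FreeGroup.lift fun f => (of V).map f

/-- The prefunctor sending an edge to the inverse of the corresponding generator. The inverse
compensates for composition in `SingleObj` being multiplication in the reverse order. -/
def invGenerator : V ⥤q SingleObj (FreeGroup ((default : V) ⟶ default)) where
  obj _ := SingleObj.star _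
  map {X Y} f := ((FreeGroup.of (Quiver.Hom.cast (Unique.eq_default X) (Unique.eq_default Y) f))⁻¹ :
    FreeGroup ((default : V) ⟶ default))

/-- The homomorphism from the vertex group of the free groupoid to the free group on loops. -/
def toFreeGroup :
    ((of V).obj default ⟶ (of V).obj default) →* FreeGroup ((default : V) ⟶ default) where
  toFun p := ((lift (invGenerator V)).map p : FreeGroup ((default : V) ⟶ default))⁻¹
  map_one' := by
    rw [Groupoid.vertexGroup_one, CategoryTheory.Functor.map_id, SingleObj.id_as_one]
    exact inv_one
  map_mul' p q := by
    rw [Groupoid.vertexGroup_mul, Functor.map_comp, SingleObj.comp_as_mul]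
    exact mul_inv_rev _ _

theorem toFreeGroup_of_map (f : (default : V) ⟶ default) :
    toFreeGroup V ((of V).map f) = FreeGroup.of f := by
  have h : (lift (invGenerator V)).map ((of V).map f) = (invGenerator V).map f :=
    eq_of_heq (Prefunctor.congr_hom (lift_spec (invGenerator V)) f).heq
  exact (congrArg (fun x : FreeGroup ((default : V) ⟶ default) => x⁻¹) h).trans (inv_inv _)

theorem toFreeGroup_comp_ofFreeGroup :
    (toFreeGroup V).comp (ofFreeGroup V) = MonoidHom.id _ := by
  ext f
  simp [ofFreeGroup, toFreeGroup_of_map]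

theorem mk_mem_range_ofFreeGroup {Y : Symmetrify V} (p : Path (V := Symmetrify V) (default : V) Y)
    (h : Y = (default : V)) :
    (Quot.mk _ (p.cast rfl h) : (of V).obj default ⟶ (of V).obj default) ∈
      (ofFreeGroup V).range := by
  induction p with
  | nil => exact one_mem _
  | @cons X Y p f ih =>
    obtain rfl : X = (default : V) := Unique.eq_default (α := V) X
    subst h
    have hf : (Quot.mk _ f.toPath : (of V).obj default ⟶ (of V).obj default) ∈
        (ofFreeGroup V).range := by
      rcases f with f | f
      · exact ⟨FreeGroup.of f, FreeGroup.lift_apply_of⟩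
      · have hinv : (of V).map f ∈ (ofFreeGroup V).range :=
          ⟨FreeGroup.of f, FreeGroup.lift_apply_of⟩
        exact inv_mem hinv
    exact mul_mem (ih rfl) hf

theorem ofFreeGroup_bijective : Function.Bijective (ofFreeGroup V) := by
  refine ⟨Function.LeftInverse.injective (g := toFreeGroup V)
    (DFunLike.congr_fun (toFreeGroup_comp_ofFreeGroup V)), ?_⟩
  rintro ⟨p⟩
  exact mk_mem_range_ofFreeGroup V p rfl

end Quiver.FreeGroupoid

/-- The graph groupoid of the one-vertex-`N`-loop-edge graph is group-isomorphic to the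
free group on `N` generators: the vertex group of the free groupoid at the unique vertex
is isomorphic to `FreeGroup (Fin N)`. -/
theorem vertexGroup_freeGroupoid_one_vertex_N_loops
    (N : ℕ) {V : Type u} [Quiver.{v} V] [Unique V]
    (e : ((default : V) ⟶ (default : V)) ≃ Fin N) :
    Nonempty
      ((((Quiver.FreeGroupoid.of V).obj default ⟶ (Quiver.FreeGroupoid.of V).obj default) ≃*
        FreeGroup (Fin N))) := by
  exact ⟨(MulEquiv.ofBijective _ (Quiver.FreeGroupoid.ofFreeGroup_bijective V)).symm.trans
    (FreeGroup.freeGroupCongr e)⟩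
end
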